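/- Let (T, 𝓑) be a rooted tree decomposition of a connected graph G with positive vertex weights, with induced node weights w(v), and define heavy/light edges and the proper and v-exposed heavy path decompositions of T with respect to these node weights. For any vertex x of G and any node v of T that is equal to b(x) or an ancestor of b(x), the symmetric difference between the solid edge set of the proper heavy path decomposition and the solid edge set of the v-exposed heavy path decomposition has size at most 1 + 2·⌊log₂( w(T_r) / w(x) )⌋. -/

import Mathlib

/-!
An edge `(c, p(c))` on which the two decompositions differ is of one of two kinds: a light edge on
the root-to-`v` path, or a heavy edge leaving that path downwards. A node has at most one heavy
child, since the subtrees of two heavy children would together outweigh the subtree of their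
parent (`ParentTree.heavy_unique`). Hence if a heavy edge leaves the path at a node other than `v`,
then the path edge below that node is light, and there is at most one more edge of the second kind
(below `v`) than light edges on the path (`ParentTree.symmDiff_card_le`).

Going down a light edge at least halves the subtree weight, so a path with `k` light edges satisfies
`2 ^ k * w(T_v) ≤ w(T_r)` (`ParentTree.two_pow_lightEdges_mul_le`). As `v` is an ancestor of `b(x)`,
`w(x) ≤ w(T_v)`, so `k ≤ log₂ (w(T_r) / w(x))`.
-/

open scoped Classical

/-- A finite rooted tree, given by a root and a parent function:
the root is its own parent, and every node reaches the root by
iterating the parent function. -/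
structure ParentTree (V : Type*) [Fintype V] where
  root : V
  parent : V → V
  parent_root : parent root = root
  reaches : ∀ v : V, ∃ n : ℕ, parent^[n] v = root

namespace ParentTree

variable {V : Type*} [Fintype V]

/-- `w(T_x)`: total weight of the subtree rooted at `x`. -/
noncomputable def subtreeWeight (T : ParentTree V) (w : V → ℝ) (x : V) : ℝ :=
  ∑ y ∈ Finset.univ.filter (fun y => ∃ n : ℕ, T.parent^[n] y = x), w y

/-- The node `c` (equivalently, the edge from `c` to its parent) is *heavy*
if `w(T_{p(c)}) < 2 · w(T_c)`; otherwise it is *light*. -/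
def Heavy (T : ParentTree V) (w : V → ℝ) (c : V) : Prop :=
  T.subtreeWeight w (T.parent c) < 2 * T.subtreeWeight w c

/-- Distance from `v` to the root. -/
noncomputable def depth (T : ParentTree V) (v : V) : ℕ := Nat.find (T.reaches v)

/-- The *light depth* `ℓ(v)`: the number of light edges on the root-to-`v` path. -/
noncomputable def lightDepth (T : ParentTree V) (w : V → ℝ) (v : V) : ℕ :=
  ((Finset.range (T.depth v)).filter (fun i => ¬ T.Heavy w (T.parent^[i] v))).card

/-- The edge from `c` to its parent is solid in the `u`-exposed heavy path
decomposition: either it lies on the root-to-`u` path, or its upper endpoint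
is not on that path and the edge is heavy. -/
def ExposedSolid (T : ParentTree V) (w : V → ℝ) (u c : V) : Prop :=
  (∃ n : ℕ, T.parent^[n] u = c) ∨
    ((¬ ∃ n : ℕ, T.parent^[n] u = T.parent c) ∧ T.Heavy w c)

/-- Neighbor relation in the tree. -/
def Adj (T : ParentTree V) (u v : V) : Prop :=
  (u ≠ T.root ∧ T.parent u = v) ∨ (v ≠ T.root ∧ T.parent v = u)

/-- Degree of a node of the tree. -/
noncomputable def degree (T : ParentTree V) (v : V) : ℕ :=
  (Finset.univ.filter (fun c => c ≠ T.root ∧ T.parent c = v)).card +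
    (if v = T.root then 0 else 1)

/-- Distance between two nodes of the tree (length of a shortest walk). -/
noncomputable def tdist (T : ParentTree V) (u v : V) : ℕ :=
  sInf {m : ℕ | ∃ p : ℕ → V, p 0 = u ∧ p m = v ∧ ∀ i < m, T.Adj (p i) (p (i + 1))}

end ParentTree

/-- Induced node weight `w(v) = Σ_{x : b(x) = v} w(x)`. -/
noncomputable def inducedWeight {VG VT : Type*} [Fintype VG]
    (b : VG → VT) (wG : VG → ℝ) (v : VT) : ℝ :=
  ∑ x ∈ Finset.univ.filter (fun x => b x = v), wG x

namespace ParentTree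

theorem iterate_root {V : Type*} [Fintype V] (T : ParentTree V) (n : ℕ) :
    T.parent^[n] T.root = T.root :=
  Function.iterate_fixed T.parent_root n

/-- The only cycle of the parent function is the loop at the root. -/
theorem eq_root_of_cycle {V : Type*} [Fintype V] (T : ParentTree V) {c : V} {k : ℕ}
    (h : T.parent^[k + 1] c = c) : c = T.root := by
  obtain ⟨n, hn⟩ := T.reaches c
  have h1 : T.parent^[(k + 1) * n] c = c := by
    rw [Function.iterate_mul]
    exact Function.iterate_fixed h n
  have h2 : (k + 1) * n = k * n + n := by ring
  rw [h2, Function.iterate_add_apply, hn, iterate_root] at h1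
  exact h1.symm

/-- Distinct siblings have disjoint subtrees. -/
theorem sibling_eq {V : Type*} [Fintype V] (T : ParentTree V) {c d y : V}
    (hc : c ≠ T.root) (hd : d ≠ T.root) (hp : T.parent c = T.parent d)
    (hyc : ∃ n : ℕ, T.parent^[n] y = c) (hyd : ∃ n : ℕ, T.parent^[n] y = d) : c = d := by
  obtain ⟨m, hm⟩ := hyc
  obtain ⟨n, hn⟩ := hyd
  wlog hmn : m ≤ n generalizing c d m n
  · exact (this hd hc hp.symm n hn m hm (by omega)).symm
  obtain ⟨k, rfl⟩ := Nat.exists_eq_add_of_le' hmn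
  rw [Function.iterate_add_apply, hm] at hn
  cases k with
  | zero => exact hn
  | succ k =>
    -- Siblings share their proper ancestors, so `d` would be a proper ancestor of itself.
    rw [Function.iterate_succ_apply, hp, ← Function.iterate_succ_apply] at hn
    exact absurd (T.eq_root_of_cycle hn) hd

theorem subtreeWeight_le_parent {V : Type*} [Fintype V] (T : ParentTree V) {w : V → ℝ}
    (hw : ∀ v, 0 ≤ w v) (c : V) :
    T.subtreeWeight w c ≤ T.subtreeWeight w (T.parent c) := by
  unfold subtreeWeight
  refine Finset.sum_le_sum_of_subset_of_nonneg ?_ (fun i _ _ => hw i)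
  intro y hy
  simp only [Finset.mem_filter, Finset.mem_univ, true_and] at hy ⊢
  obtain ⟨n, hn⟩ := hy
  exact ⟨n + 1, by rw [Function.iterate_succ_apply', hn]⟩

theorem heavy_unique {V : Type*} [Fintype V] (T : ParentTree V) {w : V → ℝ}
    (hw : ∀ v, 0 ≤ w v) {c d : V} (hc : c ≠ T.root) (hd : d ≠ T.root)
    (hp : T.parent c = T.parent d) (hHc : T.Heavy w c) (hHd : T.Heavy w d) : c = d := by
  by_contra hcd
  have key : T.subtreeWeight w c + T.subtreeWeight w d ≤ T.subtreeWeight w (T.parent c) := by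
    unfold subtreeWeight
    rw [← Finset.sum_union]
    · refine Finset.sum_le_sum_of_subset_of_nonneg ?_ (fun i _ _ => hw i)
      intro y hy
      simp only [Finset.mem_union, Finset.mem_filter, Finset.mem_univ, true_and] at hy ⊢
      rcases hy with ⟨n, hn⟩ | ⟨n, hn⟩
      · exact ⟨n + 1, by rw [Function.iterate_succ_apply', hn]⟩
      · exact ⟨n + 1, by rw [Function.iterate_succ_apply', hn, hp]⟩
    · rw [Finset.disjoint_left]
      intro y hy hy'
      simp only [Finset.mem_filter, Finset.mem_univ, true_and] at hy hy'
      exact hcd (T.sibling_eq hc hd hp hy hy')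
  unfold Heavy at hHc hHd
  rw [← hp] at hHd
  linarith

/-- The light edges on the root-to-`v` path, each represented by its lower endpoint. -/
noncomputable def lightEdges {V : Type*} [Fintype V] (T : ParentTree V) (w : V → ℝ) (v : V) :
    Finset V :=
  Finset.univ.filter (fun c => c ≠ T.root ∧ (∃ n : ℕ, T.parent^[n] v = c) ∧ ¬ T.Heavy w c)

theorem lightEdges_root {V : Type*} [Fintype V] (T : ParentTree V) (w : V → ℝ) :
    T.lightEdges w T.root = ∅ := by
  ext c
  simp only [lightEdges, Finset.mem_filter, Finset.mem_univ, true_and, Finset.notMem_empty,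
    iff_false]
  rintro ⟨hc, ⟨n, hn⟩, -⟩
  exact hc (by rw [← hn, iterate_root])

theorem two_pow_lightEdges_mul_le {V : Type*} [Fintype V] (T : ParentTree V) {w : V → ℝ}
    (hw : ∀ v, 0 ≤ w v) (v : V) :
    2 ^ (T.lightEdges w v).card * T.subtreeWeight w v ≤ T.subtreeWeight w T.root := by
  obtain ⟨n, hn⟩ := T.reaches v
  induction n generalizing v with
  | zero =>
    obtain rfl : v = T.root := hn
    simp [lightEdges_root]
  | succ n ih =>
    have ih := ih (T.parent v) hn
    by_cases hH : T.Heavy w v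
    · have hsub : T.lightEdges w v ⊆ T.lightEdges w (T.parent v) := by
        intro c hc
        simp only [lightEdges, Finset.mem_filter, Finset.mem_univ, true_and] at hc ⊢
        obtain ⟨h1, ⟨m, hm⟩, h3⟩ := hc
        cases m with
        | zero =>
          obtain rfl : v = c := hm
          exact absurd hH h3
        | succ m => exact ⟨h1, ⟨m, hm⟩, h3⟩
      refine le_trans ?_ ih
      have h0 : 0 ≤ T.subtreeWeight w v := Finset.sum_nonneg (fun i _ => hw i)
      exact mul_le_mul
        (pow_le_pow_right₀ (by norm_num) (Finset.card_le_card hsub))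
        (T.subtreeWeight_le_parent hw v) h0 (by positivity)
    · have hsub : T.lightEdges w v ⊆ insert v (T.lightEdges w (T.parent v)) := by
        intro c hc
        simp only [lightEdges, Finset.mem_filter, Finset.mem_univ, true_and,
          Finset.mem_insert] at hc ⊢
        obtain ⟨h1, ⟨m, hm⟩, h3⟩ := hc
        cases m with
        | zero => exact Or.inl hm.symm
        | succ m => exact Or.inr ⟨h1, ⟨m, hm⟩, h3⟩
      have hcard := (Finset.card_le_card hsub).trans (Finset.card_insert_le _ _)
      have h0 : 0 ≤ T.subtreeWeight w v := Finset.sum_nonneg (fun i _ => hw i)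
      have hl : 2 * T.subtreeWeight w v ≤ T.subtreeWeight w (T.parent v) := not_lt.mp hH
      calc 2 ^ (T.lightEdges w v).card * T.subtreeWeight w v
          ≤ 2 ^ ((T.lightEdges w (T.parent v)).card + 1) * T.subtreeWeight w v :=
            mul_le_mul_of_nonneg_right (pow_le_pow_right₀ (by norm_num) hcard) h0
        _ = 2 ^ (T.lightEdges w (T.parent v)).card * (2 * T.subtreeWeight w v) := by ring
        _ ≤ 2 ^ (T.lightEdges w (T.parent v)).card * T.subtreeWeight w (T.parent v) :=
            mul_le_mul_of_nonneg_left hl (by positivity)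
        _ ≤ _ := ih

/-- If a heavy edge leaves the root-to-`v` path at a node other than `v`, the path edge below that
node is light. -/
theorem parent_mem_of_heavy {V : Type*} [Fintype V] (T : ParentTree V) {w : V → ℝ}
    (hw : ∀ v, 0 ≤ w v) {v c : V} (hc : c ≠ T.root) (hcv : ¬ ∃ n : ℕ, T.parent^[n] v = c)
    (hpv : ∃ n : ℕ, T.parent^[n] v = T.parent c) (hH : T.Heavy w c) :
    T.parent c ∈ insert v ((T.lightEdges w v).image T.parent) := by
  obtain ⟨n, hn, hmin⟩ : ∃ n, T.parent^[n] v = T.parent c ∧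
      ∀ m < n, T.parent^[m] v ≠ T.parent c :=
    ⟨Nat.find hpv, Nat.find_spec hpv, fun m hm => Nat.find_min hpv hm⟩
  rw [Finset.mem_insert]
  cases n with
  | zero => exact Or.inl hn.symm
  | succ n =>
    right
    have hp : T.parent (T.parent^[n] v) = T.parent c := by
      rw [← Function.iterate_succ_apply' T.parent, hn]
    -- Minimality of the number of steps excludes the loop at the root.
    have hroot : T.parent^[n] v ≠ T.root := by
      intro h
      apply hmin n (by omega)
      rw [← hp, h, T.parent_root]
    refine Finset.mem_image.mpr ⟨T.parent^[n] v, ?_, hp⟩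
    simp only [lightEdges, Finset.mem_filter, Finset.mem_univ, true_and]
    exact ⟨hroot, ⟨n, rfl⟩, fun hH' => hcv ⟨n, T.heavy_unique hw hroot hc hp hH' hH⟩⟩

theorem symmDiff_card_le {V : Type*} [Fintype V] (T : ParentTree V) {w : V → ℝ}
    (hw : ∀ v, 0 ≤ w v) (v : V) :
    (Finset.univ.filter (fun c => c ≠ T.root ∧
        ¬ (T.Heavy w c ↔ T.ExposedSolid w v c))).card ≤ 1 + 2 * (T.lightEdges w v).card := by
  set H : Finset V := Finset.univ.filter (fun c => c ≠ T.root ∧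
    (¬ ∃ n : ℕ, T.parent^[n] v = c) ∧ (∃ n : ℕ, T.parent^[n] v = T.parent c) ∧ T.Heavy w c)
    with hHdef
  have hsub : (Finset.univ.filter (fun c => c ≠ T.root ∧
      ¬ (T.Heavy w c ↔ T.ExposedSolid w v c))) ⊆ T.lightEdges w v ∪ H := by
    intro c hc
    obtain ⟨-, hc1, hc2⟩ := Finset.mem_filter.mp hc
    simp only [hHdef, lightEdges, Finset.mem_union, Finset.mem_filter, Finset.mem_univ, true_and]
    unfold ExposedSolid at hc2
    tauto
  have hH : H.card ≤ (T.lightEdges w v).card + 1 := by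
    calc H.card ≤ (insert v ((T.lightEdges w v).image T.parent)).card := by
          apply Finset.card_le_card_of_injOn T.parent
          · intro c hc
            obtain ⟨-, h1, h2, h3, h4⟩ := Finset.mem_filter.mp (Finset.mem_coe.mp hc)
            exact T.parent_mem_of_heavy hw h1 h2 h3 h4
          · intro c hc d hd hcd
            obtain ⟨-, h1, -, -, h4⟩ := Finset.mem_filter.mp (Finset.mem_coe.mp hc)
            obtain ⟨-, h1', -, -, h4'⟩ := Finset.mem_filter.mp (Finset.mem_coe.mp hd)
            exact T.heavy_unique hw h1 h1' hcd h4 h4'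
      _ ≤ ((T.lightEdges w v).image T.parent).card + 1 := Finset.card_insert_le _ _
      _ ≤ (T.lightEdges w v).card + 1 := Nat.add_le_add_right Finset.card_image_le 1
  have h1 := Finset.card_le_card hsub
  have h2 := Finset.card_union_le (T.lightEdges w v) H
  omega

end ParentTree

/-- In a rooted tree decomposition `(T, 𝓑)` of a connected graph `G` with
positive vertex weights and induced node weights, for any vertex `x` of `G`
and any node `v` of `T` that is `b(x)` or an ancestor of `b(x)`, the symmetric
difference between the solid edge set of the proper heavy path decomposition
and the solid edge set of the `v`-exposed heavy path decomposition has size at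
most `1 + 2·⌊log₂( w(T_r) / w(x) )⌋`. -/
theorem symmDiff_card_le_of_ancestor {VG VT : Type*} [Fintype VG] [Fintype VT]
    (G : SimpleGraph VG) (hG : G.Connected)
    (T : ParentTree VT) (𝓑 : VT → Set VG)
    (hT1 : ∀ x : VG, ∃ u : VT, x ∈ 𝓑 u)
    (hT2 : ∀ (m : ℕ) (p : ℕ → VT),
      (∀ i, i < m → T.Adj (p i) (p (i + 1))) →
      (∀ i j, i ≤ m → j ≤ m → p i = p j → i = j) →
      ∀ i, i ≤ m → 𝓑 (p 0) ∩ 𝓑 (p m) ⊆ 𝓑 (p i))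
    (hT3 : ∀ x y : VG, G.Adj x y → ∃ u : VT, x ∈ 𝓑 u ∧ y ∈ 𝓑 u)
    (wG : VG → ℝ) (hwG : ∀ x, 0 < wG x)
    (b : VG → VT)
    (hb : ∀ x : VG, x ∈ 𝓑 (b x) ∧ ∀ u : VT, x ∈ 𝓑 u → T.depth (b x) ≤ T.depth u)
    (x : VG) (v : VT) (hv : ∃ n : ℕ, T.parent^[n] (b x) = v) :
    (Finset.univ.filter (fun c => c ≠ T.root ∧
        ¬ (T.Heavy (inducedWeight b wG) c ↔
            T.ExposedSolid (inducedWeight b wG) v c))).card ≤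
      1 + 2 * ⌊Real.logb 2 (T.subtreeWeight (inducedWeight b wG) T.root / wG x)⌋₊ := by
  have hw : ∀ u, 0 ≤ inducedWeight b wG u := fun u =>
    Finset.sum_nonneg (fun y _ => (hwG y).le)
  refine (T.symmDiff_card_le hw v).trans ?_
  have hx : wG x ≤ T.subtreeWeight (inducedWeight b wG) v := by
    calc wG x ≤ inducedWeight b wG (b x) :=
          Finset.single_le_sum (f := wG) (fun y _ => (hwG y).le) (by simp)
      _ ≤ _ := Finset.single_le_sum (f := inducedWeight b wG) (fun u _ => hw u) (by simpa using hv)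
  have hpow := T.two_pow_lightEdges_mul_le hw v
  have hle : (2 : ℝ) ^ (T.lightEdges (inducedWeight b wG) v).card ≤
      T.subtreeWeight (inducedWeight b wG) T.root / wG x := by
    rw [le_div_iff₀ (hwG x)]
    exact (mul_le_mul_of_nonneg_left hx (by positivity)).trans hpow
  have hfloor : (T.lightEdges (inducedWeight b wG) v).card ≤
      ⌊Real.logb 2 (T.subtreeWeight (inducedWeight b wG) T.root / wG x)⌋₊ := by
    apply Nat.le_floor
    rw [Real.le_logb_iff_rpow_le (by norm_num) (lt_of_lt_of_le (by positivity) hle),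
      Real.rpow_natCast]
    exact hle
  omega
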